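/- Let G = (𝒩, w) be a closed integer octagonal graph such that there exists a tightly closed integer octagonal graph w^T that is the tight closure of G (i.e., w^T ⊴ w and every tightly closed integer octagonal graph w′ ⊴ w satisfies w′ ⊴ w^T). Then for all z₁, z₂ ∈ 𝒩 at least one of the following holds: (a) w^T(z₁,z₂) = w(z₁,z₂); (b) w^T(z₁,z₂) = ⌊w(z₁, z̄₁)/2⌋ + ⌊w(z̄₂, z₂)/2⌋. -/

import Mathlib

/-- Extended rationals: ℚ ∪ {+∞}. -/
abbrev Qinf := WithTop ℚ

/-- Weight of a path (list of nodes): sum of the weights of its arcs. -/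
def pathWeight {N : Type*} (w : N → N → Qinf) : List N → Qinf
  | [] => 0
  | [_] => 0
  | a :: b :: l => w a b + pathWeight w (b :: l)

/-- A proper cycle: at least two arcs, first node equals last node,
    consecutive nodes distinct. -/
def IsProperCycle {N : Type*} (l : List N) : Prop :=
  3 ≤ l.length ∧ l.head? = l.getLast? ∧ l.Chain' (· ≠ ·)

/-- A graph is consistent if it has no proper cycle of negative weight. -/
def Consistent {N : Type*} (w : N → N → Qinf) : Prop :=
  ∀ l : List N, IsProperCycle l → 0 ≤ pathWeight w l

/-- A consistent graph is closed if self-loops have weight 0 and the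
    triangle inequality holds. -/
def ClosedG {N : Type*} (w : N → N → Qinf) : Prop :=
  Consistent w ∧ (∀ i, w i i = 0) ∧ ∀ i j k, w i j ≤ w i k + w k j

/-- The "bar" involution on nodes: ī = i+1 for even i, ī = i-1 for odd i. -/
def bar {n : ℕ} (i : Fin (2 * n)) : Fin (2 * n) :=
  if _h : i.val % 2 = 0 then ⟨i.val + 1, by have := i.isLt; omega⟩
  else ⟨i.val - 1, by have := i.isLt; omega⟩

/-- Coherence: w(i,j) = w(j̄,ī). -/
def Coherent {n : ℕ} (w : Fin (2 * n) → Fin (2 * n) → Qinf) : Prop :=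
  ∀ i j, w i j = w (bar j) (bar i)

/-- An octagonal graph: consistent and coherent. -/
def Octagonal {n : ℕ} (w : Fin (2 * n) → Fin (2 * n) → Qinf) : Prop :=
  Consistent w ∧ Coherent w

/-- Pointwise order on graphs. -/
def GLe {n : ℕ} (w₁ w₂ : Fin (2 * n) → Fin (2 * n) → Qinf) : Prop :=
  ∀ i j, w₁ i j ≤ w₂ i j

/-- Halving on ℚ∞ (with +∞/2 = +∞). -/
def half (x : Qinf) : Qinf := x.map (fun q => q / 2)

/-- Floored halving on ℚ∞ (with ⌊+∞/2⌋ = +∞). -/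
def fhalf (x : Qinf) : Qinf := x.map (fun q => ((⌊q / 2⌋ : ℤ) : ℚ))

/-- Integer weights: every weight is an integer or +∞. -/
def IntWeights {n : ℕ} (w : Fin (2 * n) → Fin (2 * n) → Qinf) : Prop :=
  ∀ i j, w i j = ⊤ ∨ ∃ d : ℤ, w i j = ((d : ℚ) : Qinf)

/-- A strongly closed octagonal graph. -/
def StronglyClosed {n : ℕ} (w : Fin (2 * n) → Fin (2 * n) → Qinf) : Prop :=
  Octagonal w ∧ ClosedG w ∧ ∀ i j, 2 * w i j ≤ w i (bar i) + w (bar j) j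

/-- A tightly closed integer octagonal graph. -/
def TightlyClosed {n : ℕ} (w : Fin (2 * n) → Fin (2 * n) → Qinf) : Prop :=
  IntWeights w ∧ StronglyClosed w ∧
    ∀ i, w i (bar i) = ⊤ ∨ ∃ d : ℤ, w i (bar i) = (((2 * d : ℤ) : ℚ) : Qinf)


theorem qi_fhalf_le (x : Qinf) : fhalf x + fhalf x ≤ x := by
  induction x using WithTop.recTopCoe with
  | top => exact le_top
  | coe q =>
    show ((((⌊q / 2⌋ : ℤ) : ℚ) : Qinf)) + (((⌊q / 2⌋ : ℤ) : ℚ) : Qinf) ≤ (q : Qinf)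
    have := Int.floor_le (q / 2)
    rw [← WithTop.coe_add, WithTop.coe_le_coe]
    linarith

theorem qi_fhalf_top : fhalf ⊤ = ⊤ := rfl

theorem qi_fhalf_coe (q : ℚ) : fhalf (q : Qinf) = (((⌊q / 2⌋ : ℤ) : ℚ) : Qinf) := rfl

theorem qi_fhalf_int (x : Qinf) : fhalf x = ⊤ ∨ ∃ d : ℤ, fhalf x = ((d : ℚ) : Qinf) := by
  induction x using WithTop.recTopCoe with
  | top => exact Or.inl rfl
  | coe q => exact Or.inr ⟨_, rfl⟩

theorem qi_fhalf_tri (x y a : Qinf) (ha : a = ⊤ ∨ ∃ d : ℤ, a = ((d : ℚ) : Qinf))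
    (h : x ≤ a + (y + a)) : fhalf x ≤ a + fhalf y := by
  rcases ha with rfl | ⟨d, rfl⟩
  · simp
  induction y using WithTop.recTopCoe with
  | top => simp [qi_fhalf_top]
  | coe y =>
    induction x using WithTop.recTopCoe with
    | top =>
      exfalso
      rw [← WithTop.coe_add, ← WithTop.coe_add] at h
      exact absurd h (by simp)
    | coe x =>
      rw [← WithTop.coe_add, ← WithTop.coe_add, WithTop.coe_le_coe] at h
      rw [qi_fhalf_coe, qi_fhalf_coe, ← WithTop.coe_add, WithTop.coe_le_coe]
      have h1 : ⌊x / 2⌋ ≤ d + ⌊y / 2⌋ := by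
        rw [← Int.floor_intCast_add]
        apply Int.floor_le_floor
        linarith
      exact_mod_cast h1

theorem qi_even_le (e x : Qinf) (he : e = ⊤ ∨ ∃ d : ℤ, e = (((2 * d : ℤ) : ℚ) : Qinf))
    (h : e ≤ x) : e ≤ fhalf x + fhalf x := by
  induction x using WithTop.recTopCoe with
  | top => simp [qi_fhalf_top]
  | coe x =>
    rcases he with rfl | ⟨d, rfl⟩
    · exact absurd h (by simp)
    rw [WithTop.coe_le_coe] at h
    rw [qi_fhalf_coe, ← WithTop.coe_add, WithTop.coe_le_coe]
    have h1 : d ≤ ⌊x / 2⌋ := by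
      rw [Int.le_floor]
      push_cast at h
      linarith
    have h2 : (d : ℚ) ≤ ⌊x / 2⌋ := by exact_mod_cast h1
    push_cast
    linarith

theorem qi_two_mul (t : Qinf) : 2 * t = t + t := by
  induction t using WithTop.recTopCoe with
  | top => exact WithTop.mul_top (by norm_num)
  | coe t =>
    have h2 : (2 : Qinf) = ((2 : ℚ) : Qinf) := rfl
    rw [h2, ← WithTop.coe_mul, ← WithTop.coe_add, two_mul]

theorem qi_half_le (t a b : Qinf) (h : 2 * t ≤ (a + a) + (b + b)) : t ≤ a + b := by
  rw [qi_two_mul] at h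
  induction a using WithTop.recTopCoe with
  | top => simp
  | coe a =>
    induction b using WithTop.recTopCoe with
    | top => simp
    | coe b =>
      induction t using WithTop.recTopCoe with
      | top =>
        simp only [← WithTop.coe_add] at h
        exact absurd h (by simp)
      | coe t =>
        simp only [← WithTop.coe_add, WithTop.coe_le_coe] at h ⊢
        linarith

theorem qi_pathWeight_mono {N : Type*} (w v : N → N → Qinf) (h : ∀ i j, w i j ≤ v i j) :
    ∀ l : List N, pathWeight w l ≤ pathWeight v l
  | [] => le_refl _
  | [_] => le_refl _
  | a :: b :: l => add_le_add (h a b) (qi_pathWeight_mono w v h (b :: l))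

theorem qi_bar_bar {n : ℕ} (i : Fin (2 * n)) : bar (bar i) = i := by
  apply Fin.ext
  have hv : ∀ k : Fin (2 * n), (bar k).val = if k.val % 2 = 0 then k.val + 1 else k.val - 1 := by
    intro k
    unfold bar
    split_ifs <;> rfl
  rw [hv, hv]
  split_ifs <;> omega

/-- Every entry of the tight closure of a closed integer octagonal
    graph either equals the original entry or equals the tight-coherence
    combination of the tightened unary entries. -/
theorem tight_closure_entry_characterization
    {n : ℕ} (hn : 1 ≤ n) (w : Fin (2 * n) → Fin (2 * n) → Qinf)
    (hoct : Octagonal w) (hint : IntWeights w) (hcl : ClosedG w)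
    (wT : Fin (2 * n) → Fin (2 * n) → Qinf)
    (hT : TightlyClosed wT) (hle : GLe wT w)
    (hmax : ∀ w' : Fin (2 * n) → Fin (2 * n) → Qinf,
      TightlyClosed w' → GLe w' w → GLe w' wT) :
    ∀ z₁ z₂ : Fin (2 * n),
      wT z₁ z₂ = w z₁ z₂ ∨
        wT z₁ z₂ = fhalf (w z₁ (bar z₁)) + fhalf (w (bar z₂) z₂) := by
  obtain ⟨hTint, ⟨⟨hTcons, hTcoh⟩, ⟨-, hTzero, hTtri⟩, hTstr⟩, hTeven⟩ := hT
  obtain ⟨hcons, hcoh⟩ := hoct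
  obtain ⟨-, hzero, htri⟩ := hcl
  let f : Fin (2 * n) → Qinf := fun i => fhalf (w i (bar i))
  let u : Fin (2 * n) → Fin (2 * n) → Qinf := fun i j => min (w i j) (f i + f (bar j))
  have hfb : ∀ j, f (bar j) = fhalf (w (bar j) j) := fun j => by
    show fhalf (w (bar j) (bar (bar j))) = _
    rw [qi_bar_bar]
  have hTf : ∀ i, wT i (bar i) ≤ f i + f i := fun i =>
    qi_even_le _ _ (hTeven i) (hle i (bar i))
  have hTu : ∀ i j, wT i j ≤ u i j := fun i j => by
    refine le_min (hle i j) (qi_half_le _ _ _ ((hTstr i j).trans (add_le_add (hTf i) ?_)))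
    have := hTf (bar j)
    rwa [qi_bar_bar] at this
  have hff : ∀ i, 0 ≤ f i + f (bar i) := fun i => by
    rw [← hTzero i]
    exact (hTu i i).trans (min_le_right _ _)
  have huu : ∀ i, u i (bar i) = f i + f i := fun i => by
    show min (w i (bar i)) (f i + f (bar (bar i))) = _
    rw [qi_bar_bar]
    exact min_eq_right (qi_fhalf_le _)
  have hftri : ∀ i k, f i ≤ w i k + f k := fun i k => by
    refine qi_fhalf_tri _ _ _ (hint i k) ((htri i (bar i) k).trans (add_le_add le_rfl ?_))
    refine (htri k (bar i) (bar k)).trans (add_le_add le_rfl ?_)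
    rw [← hcoh i k]
  have hucons : Consistent u := fun l hl =>
    (hTcons l hl).trans (qi_pathWeight_mono _ _ hTu l)
  have hu : TightlyClosed u := by
    refine ⟨?_, ⟨⟨hucons, ?_⟩, ⟨hucons, ?_, ?_⟩, ?_⟩, ?_⟩
    · intro i j
      show min (w i j) (f i + f (bar j)) = ⊤ ∨ ∃ d : ℤ, min (w i j) (f i + f (bar j)) = _
      rcases min_choice (w i j) (f i + f (bar j)) with h | h
      · rw [h]; exact hint i j
      · rw [h]
        rcases qi_fhalf_int (w i (bar i)) with h1 | ⟨d, h1⟩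
        · left; show fhalf _ + _ = _; rw [h1]; rfl
        rcases qi_fhalf_int (w (bar j) (bar (bar j))) with h2 | ⟨e, h2⟩
        · left; show _ + fhalf _ = _; rw [h2]; simp
        right
        refine ⟨d + e, ?_⟩
        show fhalf _ + fhalf _ = _
        rw [h1, h2, ← WithTop.coe_add]
        push_cast
        rfl
    · intro i j
      show min _ _ = min _ _
      rw [qi_bar_bar, ← hcoh i j, add_comm]
    · intro i
      show min _ _ = _
      rw [hzero]
      exact min_eq_left (hff i)
    · intro i j k
      show min _ _ ≤ min (w i k) (f i + f (bar k)) + min (w k j) (f k + f (bar j))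
      rcases min_choice (w i k) (f i + f (bar k)) with h1 | h1 <;>
      rcases min_choice (w k j) (f k + f (bar j)) with h2 | h2 <;> rw [h1, h2]
      · exact (min_le_left _ _).trans (htri i j k)
      · refine (min_le_right _ _).trans ?_
        rw [← add_assoc]
        exact add_le_add (hftri i k) le_rfl
      · refine (min_le_right _ _).trans ?_
        rw [add_assoc]
        refine add_le_add le_rfl ?_
        rw [hcoh k j, add_comm]
        exact hftri _ _
      · refine (min_le_right _ _).trans ?_
        calc f i + f (bar j) = f i + f (bar j) + 0 := (add_zero _).symm
          _ ≤ f i + f (bar j) + (f k + f (bar k)) := add_le_add le_rfl (hff k)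
          _ = f i + f (bar k) + (f k + f (bar j)) := by abel
    · intro i j
      have h2 := huu (bar j)
      rw [qi_bar_bar] at h2
      rw [huu, h2, qi_two_mul]
      refine (add_le_add (min_le_right _ _) (min_le_right _ _)).trans (le_of_eq ?_)
      abel
    · intro i
      rw [huu]
      rcases qi_fhalf_int (w i (bar i)) with h1 | ⟨d, h1⟩
      · left; show fhalf _ + _ = _; rw [h1]; rfl
      · right
        refine ⟨d, ?_⟩
        show fhalf _ + fhalf _ = _
        rw [h1, ← WithTop.coe_add]
        rw [Int.cast_mul, Int.cast_ofNat, two_mul]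
  intro z₁ z₂
  have heq : wT z₁ z₂ = min (w z₁ z₂) (f z₁ + f (bar z₂)) :=
    le_antisymm (hTu _ _) (hmax u hu (fun i j => min_le_left _ _) z₁ z₂)
  rw [heq, ← hfb]
  exact min_choice _ _
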